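/- arXiv:1802.00588 — 6 statements merged into one kernel-verified Lean document; each statement's English description precedes it below -/
import Mathlib

section
/- The five assumptions below jointly imply RSC^DC_MD. Assume all traces produced by the target semantics contain no Undef events, and: (1) Back-translation: there is a function ↑ mapping a finite prefix m and an interface i to a source component ↑(m,i) : i such that for every finite interface set I, every whole target program W : I, and every defined finite prefix m with W ⇝* m, the source program {↑(m,i) | i ∈ I} satisfies I and {↑(m,i) | i ∈ I} ⇝* m. (2) Forward compiler correctness with separate compilation: for all compatible source programs C : I_C and P : I_P and every defined finite prefix m, (C ∪ P) ⇝* m implies (C↓ ∪ P↓) ⇝* m. (3) Recomposition: for all source programs P, P' : I_P, every target program C_T : I_C, every source program C_S : I_C, and every finite prefix m, if (C_T ∪ P↓) ⇝* m and (C_S↓ ∪ P'↓) ⇝* m then (C_S↓ ∪ P↓) ⇝* m. (4) Backward compiler correctness with separate compilation and undefined behavior: for all source programs C, P and every finite prefix m, (C↓ ∪ P↓) ⇝* m implies there is a trace t with (C ∪ P) ⇝ t and (m ≤ t or t ≺ m). (5) Blame: for all C_S : I_C, P, P' : I_P, every defined finite prefix m, and every trace t, if (C_S ∪ P') ⇝*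 m, (C_S ∪ P) ⇝ t, and t ≺ m, then m ≤ t or t ≺_{I_P} m. Then the compilation chain satisfies RSC^DC_MD with the back-translation ↑ from assumption (1). -/
/-!
Since target traces contain no `Undef`, the prefix `m` is defined, so the whole target program
`C_T ∪ P↓` can be back-translated on `m` to a source program `C_S ∪ P'` producing `m`, where
`C_S : I_C` and `P' : I_P`. Forward correctness makes `C_S↓ ∪ P'↓` produce `m`, and recomposition
with `C_T ∪ P↓` makes `C_S↓ ∪ P↓` produce `m`. Backward correctness then yields a trace of
`C_S ∪ P` that either extends `m` or stops early in undefined behavior; in the latter case, blame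
(comparing with `C_S ∪ P'`) attributes that behavior to an interface in `I_P`.
-/

/-!
STATEMENT 1: the five assumptions (back-translation, forward compiler
correctness, recomposition, backward compiler correctness, blame), together
with the fact that target traces contain no Undef events, imply RSC^DC_MD.
-/

namespace Stmt1

/-- A trace is either a finite list of events or an infinite sequence of events. -/
abbrev Trace (E : Type) := List E ⊕ (ℕ → E)

/-- `prefixOf m t`: the finite trace prefix `m` is a prefix of the trace `t`. -/
def prefixOf {E : Type} (m : List E) : Trace E → Prop
  | .inl l => m <+: l
  | .inr f => ∀ i (h : i < m.length), m.get ⟨i, h⟩ = f i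

/-- `e` is an `Undef` event. -/
def isUndef {E I : Type} (undef : I → E) (e : E) : Prop := ∃ i, e = undef i

/-- Well-formedness of traces: an `Undef` event occurs at most once and only as
the last event of a (finite) trace. -/
def wfTrace {E I : Type} (undef : I → E) : Trace E → Prop
  | .inl l => ∀ i (h : i < l.length), isUndef undef (l.get ⟨i, h⟩) → i + 1 = l.length
  | .inr f => ∀ n, ¬ isUndef undef (f n)

/-- A trace contains no `Undef` events at all. -/
def noUndef {E I : Type} (undef : I → E) : Trace E → Prop
  | .inl l => ∀ e ∈ l, ¬ isUndef undef e
  | .inr f => ∀ n, ¬ isUndef undef (f n)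

/-- A finite prefix is *defined* if it contains no `Undef` event. -/
def definedPre {E I : Type} (undef : I → E) (m : List E) : Prop :=
  ∀ e ∈ m, ¬ isUndef undef e

/-- `t ≺_i m` for a trace `t` and finite prefix `m`:
`t = m'·[Undef i]` for some finite `m' ≤ m`. -/
def precI {E I : Type} (undef : I → E) (i : I) (t : Trace E) (m : List E) : Prop :=
  ∃ m' : List E, t = Sum.inl (m' ++ [undef i]) ∧ m' <+: m

/-- `t ≺_i m` where both `t` and `m` are finite prefixes. -/
def precIList {E I : Type} (undef : I → E) (i : I) (t m : List E) : Prop :=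
  ∃ m' : List E, t = m' ++ [undef i] ∧ m' <+: m

/-- `t ≺_{I_P} m`: `t ≺_i m` for some interface `i ∈ I_P`. -/
def precSet {E I : Type} (undef : I → E) (IP : Finset I) (t : Trace E) (m : List E) : Prop :=
  ∃ i ∈ IP, precI undef i t m

/-- `t ≺ m`: `t ≺_i m` for some interface `i`. -/
def precAny {E I : Type} (undef : I → E) (t : Trace E) (m : List E) : Prop :=
  ∃ i : I, precI undef i t m

/-- `W ⇝* m`: there is a trace `t` with `m ≤ t` and `W ⇝ t`. -/
def semStar {E A : Type} (sem : A → Trace E → Prop) (W : A) (m : List E) : Prop :=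
  ∃ t, prefixOf m t ∧ sem W t

/-- The compilation chain satisfies RSC^DC_MD with back-translation `bt`. -/
def RSCDCMD {E I SComp TComp : Type}
    [DecidableEq I] [DecidableEq SComp] [DecidableEq TComp]
    (undef : I → E) (sItf : SComp → I) (tItf : TComp → I)
    (compat : Finset I → Prop) (cc : SComp → TComp)
    (ssem : Finset SComp → Trace E → Prop)
    (tsem : Finset TComp → Trace E → Prop)
    (bt : List E → I → SComp) : Prop :=
  ∀ IP IC : Finset I, compat (IP ∪ IC) →
    ∀ P : Finset SComp, P.image sItf = IP →
    ∀ CT : Finset TComp, CT.image tItf = IC →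
    ∀ t : Trace E, tsem (CT ∪ P.image cc) t →
    ∀ m : List E, prefixOf m t →
    ∃ t' : Trace E, ssem (IC.image (fun i => bt m i) ∪ P) t' ∧
      (prefixOf m t' ∨ precSet undef IP t' m)

/-- The compilation chain satisfies RSCC. -/
def RSCC {E I SComp TComp : Type}
    [DecidableEq I] [DecidableEq SComp] [DecidableEq TComp]
    (undef : I → E) (sItf : SComp → I)
    (compat : Finset I → Prop) (cc : SComp → TComp)
    (ssem : Finset SComp → Trace E → Prop)
    (tsem : Finset TComp → Trace E → Prop) : Prop :=
  -- for all pairwise compatible interfaces I_1, …, I_n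
  ∀ (n : ℕ) (Itf : Fin n → I) (Cs : Fin n → SComp),
    compat (Finset.univ.image Itf) →
    -- and all source components C_1 : I_1, …, C_n : I_n
    (∀ j, sItf (Cs j) = Itf j) →
    -- for every finite trace prefix m with {C_1↓, …, C_n↓} ⇝* m
    ∀ m : List E, semStar tsem ((Finset.univ.image Cs).image cc) m →
    -- there exist distinct indices i_1, …, i_k
    ∃ (k : ℕ) (idx : Fin k → Fin n), Function.Injective idx ∧
    -- and source components A_{i_1} : I_{i_1}, …, A_{i_k} : I_{i_k}
    ∃ A : Fin k → SComp, (∀ j, sItf (A j) = Itf (idx j)) ∧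
    ∃ ms : Fin k → List E,
      -- (1) for every j ∈ {1, …, k} there is a finite prefix m_j with …
      (∀ j : Fin k,
        precIList undef (Itf (idx j)) (ms j) m ∧
        (∀ _ : 0 < j.1,
          precIList undef
            (Itf (idx ⟨j.1 - 1, lt_of_le_of_lt (Nat.sub_le _ _) j.isLt⟩))
            (ms ⟨j.1 - 1, lt_of_le_of_lt (Nat.sub_le _ _) j.isLt⟩)
            (ms j)) ∧
        semStar ssem
          (((Finset.univ.image Cs) \
              ((Finset.univ.filter (fun l : Fin k => l.1 < j.1)).image
                (fun l => Cs (idx l)))) ∪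
            ((Finset.univ.filter (fun l : Fin k => l.1 < j.1)).image A))
          (ms j)) ∧
      -- (2) replacing all compromised components reproduces the whole m
      semStar ssem
        (((Finset.univ.image Cs) \ (Finset.univ.image (fun l => Cs (idx l)))) ∪
          (Finset.univ.image A))
        m

theorem definedPre_of_prefixOf {E I : Type} {undef : I → E} {m : List E} {t : Trace E}
    (hmt : prefixOf m t) (ht : noUndef undef t) : definedPre undef m := by
  intro e he
  cases t with
  | inl l => exact ht e (List.IsPrefix.subset hmt he)
  | inr f =>
    obtain ⟨i, hi, rfl⟩ := List.mem_iff_getElem.mp he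
    have h : m[i] = f i := hmt i hi
    rw [h]
    exact ht i

theorem assumptions_imply_rscdcmd
    {E I SComp TComp : Type}
    [DecidableEq I] [DecidableEq SComp] [DecidableEq TComp]
    (undef : I → E) (sItf : SComp → I) (tItf : TComp → I)
    (compat : Finset I → Prop) (cc : SComp → TComp)
    (ssem : Finset SComp → Trace E → Prop)
    (tsem : Finset TComp → Trace E → Prop)
    -- compilation preserves interfaces
    (hcc : ∀ C, tItf (cc C) = sItf C)
    -- every source trace contains at most one Undef event, only as last event
    (hwfS : ∀ W t, ssem W t → wfTrace undef t)
    -- all traces produced by the target semantics contain no Undef events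
    (hTnoU : ∀ W t, tsem W t → noUndef undef t)
    -- (1) Back-translation
    (bt : List E → I → SComp)
    (hbtItf : ∀ m i, sItf (bt m i) = i)
    (hbt : ∀ (Iset : Finset I) (W : Finset TComp), W.image tItf = Iset →
        ∀ m : List E, definedPre undef m → semStar tsem W m →
        (Iset.image (fun i => bt m i)).image sItf = Iset ∧
        semStar ssem (Iset.image (fun i => bt m i)) m)
    -- (2) Forward compiler correctness with separate compilation
    (hfcc : ∀ IC IP : Finset I, compat (IC ∪ IP) →
        ∀ C P : Finset SComp, C.image sItf = IC → P.image sItf = IP →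
        ∀ m : List E, definedPre undef m →
        semStar ssem (C ∪ P) m → semStar tsem (C.image cc ∪ P.image cc) m)
    -- (3) Recomposition
    (hrecomp : ∀ IP IC : Finset I, ∀ P P' : Finset SComp,
        P.image sItf = IP → P'.image sItf = IP →
        ∀ CT : Finset TComp, CT.image tItf = IC →
        ∀ CS : Finset SComp, CS.image sItf = IC →
        ∀ m : List E,
        semStar tsem (CT ∪ P.image cc) m →
        semStar tsem (CS.image cc ∪ P'.image cc) m →
        semStar tsem (CS.image cc ∪ P.image cc) m)
    -- (4) Backward compiler correctness with separate compilation and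
    --     undefined behavior
    (hbcc : ∀ C P : Finset SComp, ∀ m : List E,
        semStar tsem (C.image cc ∪ P.image cc) m →
        ∃ t, ssem (C ∪ P) t ∧ (prefixOf m t ∨ precAny undef t m))
    -- (5) Blame
    (hblame : ∀ IC IP : Finset I, ∀ CS : Finset SComp, CS.image sItf = IC →
        ∀ P P' : Finset SComp, P.image sItf = IP → P'.image sItf = IP →
        ∀ m : List E, definedPre undef m → ∀ t : Trace E,
        semStar ssem (CS ∪ P') m → ssem (CS ∪ P) t → precAny undef t m →
        (prefixOf m t ∨ precSet undef IP t m)) :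
    RSCDCMD undef sItf tItf compat cc ssem tsem bt := by
  intro IP IC hcompat P hP CT hCT t ht m hmt
  -- `m` is defined, being a prefix of a target trace.
  have hdef : definedPre undef m := definedPre_of_prefixOf hmt (hTnoU _ _ ht)
  have hbtImage : ∀ J : Finset I, (J.image (fun i => bt m i)).image sItf = J := by
    intro J
    simp [Finset.image_image, Function.comp_def, hbtItf]
  have hW : (CT ∪ P.image cc).image tItf = IC ∪ IP := by
    rw [Finset.image_union, hCT, Finset.image_image, ← hP]
    simp [Function.comp_def, hcc]
  have htgt : semStar tsem (CT ∪ P.image cc) m := ⟨t, hmt, ht⟩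
  -- The back-translated whole program splits into a context and a program `P' : IP`.
  have hsrc := (hbt _ _ hW m hdef htgt).2
  rw [Finset.image_union] at hsrc
  have hcompiled := hfcc IC IP (by rwa [Finset.union_comm]) _ _ (hbtImage IC) (hbtImage IP)
    m hdef hsrc
  have hmixed := hrecomp IP IC P _ hP (hbtImage IP) CT hCT _ (hbtImage IC) m htgt hcompiled
  obtain ⟨t', ht', hpre | hprec⟩ := hbcc _ _ m hmixed
  · exact ⟨t', ht', Or.inl hpre⟩
  · exact ⟨t', ht', hblame IC IP _ (hbtImage IC) P _ hP (hbtImage IP) m hdef t' hsrc ht' hprec⟩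

end Stmt1
end

section
/- A compilation chain satisfies RSC^DC if and only if it robustly preserves exactly the class Z_P: that is, RSC^DC holds if and only if for every source partial program P and every trace property π ∈ Z_P, whenever P robustly satisfies π in the source (for all source contexts C_S and traces t, C_S[P] ⇝ t implies t ∈ π), then P↓ robustly satisfies π in the target (for all target contexts C_T and traces t, C_T[P↓] ⇝ t implies t ∈ π). -/
/-!
Left to right: if a target trace `t` violates `π`, safety yields a finite bad prefix `m` of `t`.
The source trace supplied by RSC^DC either extends `m`, hence violates `π`, or is
`≺_P`-below `m`, hence `≺_P`-below `t`, and closure would put `t` in `π`.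

Right to left: for a fixed prefix `m`, the set `Avoid u m` of traces that neither extend `m` nor
are `≺_P`-below `m` lies in `Z_P` (`zp_avoid`). Safety holds because a well-formed trace ending in
`UndefP` has no proper extension, so it is its own bad prefix; closure holds because two
prefixes of one trace are comparable. If RSC^DC failed at `m`, the program would robustly
satisfy `Avoid u m` in the source, whereas its compilation produces a trace extending `m`.
-/

/-!
STATEMENT 3: RSC^DC holds iff the compilation chain robustly preserves exactly
the class Z_P.
-/

namespace Stmt3

/-- A trace is either a finite list of events or an infinite sequence of events. -/
abbrev Trace (E : Type) := List E ⊕ (ℕ → E)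

/-- `prefixOf m t`: the finite trace prefix `m` is a prefix of the trace `t`. -/
def prefixOf {E : Type} (m : List E) : Trace E → Prop
  | .inl l => m <+: l
  | .inr f => ∀ i (h : i < m.length), m.get ⟨i, h⟩ = f i

/-- Well-formedness of a trace wrt the event `u = UndefP`: `u` occurs at most
once, and only as the last event (so never in an infinite trace). -/
def wf {E : Type} (u : E) : Trace E → Prop
  | .inl l => ∀ i (h : i < l.length), l.get ⟨i, h⟩ = u → i + 1 = l.length
  | .inr f => ∀ n, f n ≠ u

/-- The type of (well-formed) traces: by assumption every trace contains
`UndefP` at most once and only as its last event. -/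
abbrev WTrace (E : Type) (u : E) := { t : Trace E // wf u t }

/-- `m` is a prefix of the (well-formed) trace `t`. -/
def wPrefix {E : Type} {u : E} (m : List E) (t : WTrace E u) : Prop :=
  prefixOf m t.1

/-- `t ≺_P t'` (both traces): `t = m'·[UndefP]` for some finite `m' ≤ t'`. -/
def precP {E : Type} {u : E} (t t' : WTrace E u) : Prop :=
  ∃ m' : List E, t.1 = Sum.inl (m' ++ [u]) ∧ wPrefix m' t'

/-- `t ≺_P m` (trace vs finite prefix): `t = m'·[UndefP]` for some `m' ≤ m`. -/
def precPList {E : Type} {u : E} (t : WTrace E u) (m : List E) : Prop :=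
  ∃ m' : List E, t.1 = Sum.inl (m' ++ [u]) ∧ m' <+: m

/-- `π` is a safety property. -/
def Safety {E : Type} {u : E} (π : Set (WTrace E u)) : Prop :=
  ∀ t, t ∉ π → ∃ m : List E, wPrefix m t ∧ ∀ t', wPrefix m t' → t' ∉ π

/-- `π` is closed under extension of traces with undefined behavior in `P`. -/
def ClosedP {E : Type} {u : E} (π : Set (WTrace E u)) : Prop :=
  ∀ t ∈ π, ∀ t', precP t t' → t' ∈ π

/-- `Z_P ≜ Safety ∩ Closed_{≺_P}`. -/
def ZP {E : Type} {u : E} (π : Set (WTrace E u)) : Prop :=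
  Safety π ∧ ClosedP π

theorem wPrefix_trans {E : Type} {u : E} {m m' : List E} {t : WTrace E u}
    (h : m' <+: m) (ht : wPrefix m t) : wPrefix m' t := by
  obtain ⟨t | f, hw⟩ := t
  · exact List.IsPrefix.trans h ht
  · intro i hi
    have him : i < m.length := lt_of_lt_of_le hi h.length_le
    have h1 := ht i him
    simp only [List.get_eq_getElem] at h1 ⊢
    rw [← h1]
    exact h.getElem hi

theorem wPrefix_comparable {E : Type} {u : E} {m m' : List E} {t : WTrace E u}
    (h : wPrefix m t) (h' : wPrefix m' t) : m <+: m' ∨ m' <+: m := by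
  obtain ⟨t | f, hw⟩ := t
  · exact List.prefix_or_prefix_of_prefix h h'
  · have key : ∀ a b : List E, (∀ i (h : i < a.length), a.get ⟨i, h⟩ = f i) →
        (∀ i (h : i < b.length), b.get ⟨i, h⟩ = f i) → a.length ≤ b.length → a <+: b := by
      intro a b ha hb hl
      rw [List.prefix_iff_getElem]
      exact ⟨hl, fun i hi => (ha i hi).trans (hb i (lt_of_lt_of_le hi hl)).symm⟩
    rcases le_total m.length m'.length with hl | hl
    · exact Or.inl (key _ _ h h' hl)
    · exact Or.inr (key _ _ h' h hl)

/-- A well-formed trace extending `m'·[UndefP]` is `m'·[UndefP]` itself. -/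
theorem eq_of_wPrefix_undef {E : Type} {u : E} {m' : List E} {t : WTrace E u}
    (h : wPrefix (m' ++ [u]) t) : t.1 = Sum.inl (m' ++ [u]) := by
  obtain ⟨t | f, hw⟩ := t
  · obtain ⟨r, rfl⟩ := h
    have h1 := hw m'.length (by simp) (by simp)
    have hr : r = [] := by
      apply List.eq_nil_of_length_eq_zero
      simp only [List.length_append, List.length_singleton] at h1
      omega
    simp [hr]
  · have h1 := h m'.length (by simp)
    exact absurd (by simpa using h1.symm) (hw m'.length)

/-- The traces that neither extend `m` nor are `≺_P`-below `m`. -/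
def Avoid {E : Type} (u : E) (m : List E) : Set (WTrace E u) :=
  {t | ¬ (wPrefix m t ∨ precPList t m)}

theorem zp_avoid {E : Type} (u : E) (m : List E) : ZP (Avoid u m) := by
  constructor
  · intro t ht
    rcases not_not.mp ht with h | ⟨m', hm', hpre⟩
    · exact ⟨m, h, fun t' ht' hA => hA (Or.inl ht')⟩
    · refine ⟨m' ++ [u], ?_, fun t' ht' hA => hA (Or.inr ⟨m', eq_of_wPrefix_undef ht', hpre⟩)⟩
      rw [wPrefix, hm']
      exact List.prefix_rfl
  · rintro t ht t' ⟨m', hm', hpre⟩ (h | ⟨m'', hm'', hpre'⟩)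
    · rcases wPrefix_comparable h hpre with hc | hc
      · refine ht (Or.inl ?_)
        rw [wPrefix, hm']
        exact hc.trans (List.prefix_append _ _)
      · exact ht (Or.inr ⟨m', hm', hc⟩)
    · rw [wPrefix, hm''] at hpre
      rcases List.prefix_concat_iff.mp hpre with rfl | hc
      · -- Here `t` would end in `UndefP` twice, contradicting well-formedness.
        have hw := t.2
        rw [hm'] at hw
        have := hw m''.length (by simp) (by simp)
        simp at this
      · exact ht (Or.inr ⟨m', hm', hc.trans hpre'⟩)

/-- RSC^DC iff robust preservation of the class `Z_P`. -/
theorem rscdc_iff_robust_ZP_preservation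
    {E Prog TProg SCtx TCtx : Type} (u : E)
    (compile : Prog → TProg)
    (ssem : SCtx → Prog → WTrace E u → Prop)
    (tsem : TCtx → TProg → WTrace E u → Prop) :
    -- RSC^DC
    (∀ (P : Prog) (CT : TCtx) (t : WTrace E u), tsem CT (compile P) t →
      ∀ m : List E, wPrefix m t →
        ∃ (CS : SCtx) (t : WTrace E u), ssem CS P t ∧
          (wPrefix m t ∨ precPList t m))
    ↔
    -- robust preservation of every property in Z_P
    (∀ (P : Prog) (π : Set (WTrace E u)), ZP π →
      (∀ (CS : SCtx) (t : WTrace E u), ssem CS P t → t ∈ π) →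
      (∀ (CT : TCtx) (t : WTrace E u), tsem CT (compile P) t → t ∈ π)) := by
  constructor
  · intro hR P π hπ hS CT t ht
    by_contra hn
    obtain ⟨m, hm, hbad⟩ := hπ.1 t hn
    obtain ⟨CS, s, hs, h | ⟨m', hm', hpre⟩⟩ := hR P CT t ht m hm
    · exact hbad s h (hS CS s hs)
    · exact hn (hπ.2 s (hS CS s hs) t ⟨m', hm', wPrefix_trans hpre hm⟩)
  · intro hR P CT t ht m hm
    by_contra hn
    exact hR P (Avoid u m) (zp_avoid u m) (fun CS s hs hA => hn ⟨CS, s, hs, hA⟩) CT t ht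
      (Or.inl hm)

end Stmt3
end

section
/- A compilation chain satisfies RSC if and only if it robustly preserves all safety properties: that is, RSC holds if and only if for every source partial program P and every safety property π, whenever for all source contexts C_S and traces t, C_S[P] ⇝ t implies t ∈ π, then for all target contexts C_T and traces t, C_T[P↓] ⇝ t implies t ∈ π. -/
/-!
STATEMENT 4: RSC holds iff the compilation chain robustly preserves all safety
properties.
-/

namespace Stmt4

/-- A trace is either a finite list of events or an infinite sequence of events. -/
abbrev Trace (E : Type) := List E ⊕ (ℕ → E)

/-- `prefixOf m t`: the finite trace prefix `m` is a prefix of the trace `t`. -/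
def prefixOf {E : Type} (m : List E) : Trace E → Prop
  | .inl l => m <+: l
  | .inr f => ∀ i (h : i < m.length), m.get ⟨i, h⟩ = f i

/-- `π` is a safety property. -/
def Safety {E : Type} (π : Set (Trace E)) : Prop :=
  ∀ t, t ∉ π → ∃ m : List E, prefixOf m t ∧ ∀ t', prefixOf m t' → t' ∉ π

/-- RSC iff robust preservation of all safety properties. -/
theorem rsc_iff_robust_safety_preservation
    {E Prog TProg SCtx TCtx : Type}
    (compile : Prog → TProg)
    (ssem : SCtx → Prog → Trace E → Prop)
    (tsem : TCtx → TProg → Trace E → Prop) :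
    -- RSC
    (∀ (P : Prog) (CT : TCtx) (t : Trace E), tsem CT (compile P) t →
      ∀ m : List E, prefixOf m t →
        ∃ (CS : SCtx) (t' : Trace E), ssem CS P t' ∧ prefixOf m t')
    ↔
    -- robust preservation of all safety properties
    (∀ (P : Prog) (π : Set (Trace E)), Safety π →
      (∀ (CS : SCtx) (t : Trace E), ssem CS P t → t ∈ π) →
      (∀ (CT : TCtx) (t : Trace E), tsem CT (compile P) t → t ∈ π)) := by
  constructor
  · intro hRSC P π hπ hS CT t ht
    by_contra hnot
    obtain ⟨m, hm, hbad⟩ := hπ t hnot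
    obtain ⟨CS, t', ht', hm'⟩ := hRSC P CT t ht m hm
    exact hbad t' hm' (hS CS t' ht')
  · intro hRSP P CT t ht m hm
    by_contra hno
    -- Never extending `m` is a safety property: `m` itself is the bad prefix of every violation.
    have hsafe : Safety {u : Trace E | ¬ prefixOf m u} :=
      fun u hu => ⟨m, not_not.mp hu, fun u' hu' hmem => hmem hu'⟩
    exact hRSP P _ hsafe (fun CS u hu hmu => hno ⟨CS, u, hu, hmu⟩) CT t ht hm

end Stmt4
end

section
/- For any safety property π, the trace property π^{Z_P+} ≜ π ∩ { t | ∀ t', t ≺_P t' → t' ∈ π } is in Z_P (i.e., π^{Z_P+} is a safety property and belongs to Closed_{≺_P}), and π^{Z_P+} ⊆ π. -/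
/-!
The argument rests on two consequences of well-formedness, i.e. of `u` occurring only as a last
event. First, a trace `m'·[u]` has no proper extension (`eq_of_wPrefix_append_undef`), so when such
a trace leaves `zplus π` because of one of its `≺_P`-successors, the trace itself is a bad prefix;
when a trace leaves `zplus π` because it is not in `π`, the bad prefix given by safety of `π` works.
Second, `≺_P` is transitive (`precP_trans`), so every `≺_P`-successor of a member of `zplus π` is
again in `zplus π`.
-/

/-!
STATEMENT 5: for any safety property π, the property
π^{Z_P+} ≜ π ∩ { t | ∀ t_1, t ≺_P t_1 → t_1 ∈ π } is in Z_P and π^{Z_P+} ⊆ π.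
-/

namespace Stmt5

/-- A trace is either a finite list of events or an infinite sequence of events. -/
abbrev Trace (E : Type) := List E ⊕ (ℕ → E)

/-- `prefixOf m t`: the finite trace prefix `m` is a prefix of the trace `t`. -/
def prefixOf {E : Type} (m : List E) : Trace E → Prop
  | .inl l => m <+: l
  | .inr f => ∀ i (h : i < m.length), m.get ⟨i, h⟩ = f i

/-- Well-formedness of a trace wrt the event `u = UndefP`: `u` occurs at most
once, and only as the last event (so never in an infinite trace). -/
def wf {E : Type} (u : E) : Trace E → Prop
  | .inl l => ∀ i (h : i < l.length), l.get ⟨i, h⟩ = u → i + 1 = l.length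
  | .inr f => ∀ n, f n ≠ u

/-- The type of (well-formed) traces: by assumption every trace contains
`UndefP` at most once and only as its last event. -/
abbrev WTrace (E : Type) (u : E) := { t : Trace E // wf u t }

/-- `m` is a prefix of the (well-formed) trace `t`. -/
def wPrefix {E : Type} {u : E} (m : List E) (t : WTrace E u) : Prop :=
  prefixOf m t.1

/-- `t ≺_P t'` (both traces): `t = m'·[UndefP]` for some finite `m' ≤ t'`. -/
def precP {E : Type} {u : E} (t t' : WTrace E u) : Prop :=
  ∃ m' : List E, t.1 = Sum.inl (m' ++ [u]) ∧ wPrefix m' t'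

/-- `t ≺_P m` (trace vs finite prefix): `t = m'·[UndefP]` for some `m' ≤ m`. -/
def precPList {E : Type} {u : E} (t : WTrace E u) (m : List E) : Prop :=
  ∃ m' : List E, t.1 = Sum.inl (m' ++ [u]) ∧ m' <+: m

/-- `π` is a safety property. -/
def Safety {E : Type} {u : E} (π : Set (WTrace E u)) : Prop :=
  ∀ t, t ∉ π → ∃ m : List E, wPrefix m t ∧ ∀ t', wPrefix m t' → t' ∉ π

/-- `π` is closed under extension of traces with undefined behavior in `P`. -/
def ClosedP {E : Type} {u : E} (π : Set (WTrace E u)) : Prop :=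
  ∀ t ∈ π, ∀ t', precP t t' → t' ∈ π

/-- `Z_P ≜ Safety ∩ Closed_{≺_P}`. -/
def ZP {E : Type} {u : E} (π : Set (WTrace E u)) : Prop :=
  Safety π ∧ ClosedP π

/-- `π^{Z_P+} ≜ π ∩ { t | ∀ t_1, t ≺_P t_1 → t_1 ∈ π }`. -/
def zplus {E : Type} {u : E} (π : Set (WTrace E u)) : Set (WTrace E u) :=
  π ∩ { t | ∀ t_1, precP t t_1 → t_1 ∈ π }

theorem prefixOf_trans {E : Type} {m n : List E} (h : m <+: n) :
    ∀ {t : Trace E}, prefixOf n t → prefixOf m t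
  | .inl _, hn => List.IsPrefix.trans h hn
  | .inr f, hn => by
    intro i hi
    have hin : i < n.length := lt_of_lt_of_le hi h.length_le
    rw [← hn i hin]
    simpa using h.getElem hi

/-- A trace ending in undefined behavior is maximal: its only extension is itself. -/
theorem eq_of_wPrefix_append_undef {E : Type} {u : E} {m : List E} {t : WTrace E u}
    (h : wPrefix (m ++ [u]) t) : t.1 = Sum.inl (m ++ [u]) := by
  obtain ⟨l | f, ht⟩ := t
  · change m ++ [u] <+: l at h
    obtain ⟨s, rfl⟩ := h
    have hs := ht m.length (by simp) (by simp)
    have hs0 : s = [] := by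
      apply List.eq_nil_of_length_eq_zero
      simp only [List.length_append, List.length_singleton] at hs
      omega
    simp [hs0]
  · exact absurd (by simpa using (h m.length (by simp)).symm) (ht m.length)

theorem precP_trans {E : Type} {u : E} {t t' t'' : WTrace E u}
    (h : precP t t') (h' : precP t' t'') : precP t t'' := by
  obtain ⟨m, ht, hm⟩ := h
  obtain ⟨n, ht', hn⟩ := h'
  refine ⟨m, ht, prefixOf_trans ?_ hn⟩
  have hmn : m <+: n ++ [u] := by
    unfold wPrefix at hm
    rw [ht'] at hm
    exact hm
  rcases List.prefix_concat_iff.mp hmn with rfl | hmn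
  · -- Here `t` would be `n·[u]·[u]`, in which `u` occurs twice.
    have hw := t.2
    rw [ht] at hw
    have := hw n.length (by simp) (by simp)
    simp at this
  · exact hmn

theorem zplus_mem_ZP_and_subset
    {E : Type} (u : E) (π : Set (WTrace E u)) (hπ : Safety π) :
    ZP (zplus π) ∧ zplus π ⊆ π := by
  refine ⟨⟨?_, ?_⟩, Set.inter_subset_left⟩
  · intro t ht
    by_cases htπ : t ∈ π
    · by_cases hu : ∃ m, t.1 = Sum.inl (m ++ [u])
      · obtain ⟨m, hm⟩ := hu
        refine ⟨m ++ [u], ?_, fun t' h' => ?_⟩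
        · unfold wPrefix
          rw [hm]
          exact List.prefix_rfl
        · have : t' = t := Subtype.ext ((eq_of_wPrefix_append_undef h').trans hm.symm)
          rwa [this]
      · exact absurd ⟨htπ, fun t₁ ⟨m, hm, _⟩ => absurd ⟨m, hm⟩ hu⟩ ht
    · obtain ⟨m, hm, hbad⟩ := hπ t htπ
      exact ⟨m, hm, fun t' h' hz => hbad t' h' hz.1⟩
  · intro t ht t' h
    exact ⟨ht.2 t' h, fun t'' h'' => ht.2 t'' (precP_trans h h'')⟩

end Stmt5
end

section
/- Suppose the compilation chain satisfies RSC^DC, π is a safety property, and P robustly satisfies π in the source (for all source contexts C_S and traces t, C_S[P] ⇝ t implies t ∈ π). Then P↓ robustly satisfies the weakened property π^{Z_P-} ≜ π ∪ { t' | ∃ t ∈ π, (t ≺_P t' ∨ t' ≤ t) } in the target: for all target contexts C_T and traces t, C_T[P↓] ⇝ t implies t ∈ π^{Z_P-} (here t' ≤ t means t' is a finite trace that is a prefix of t). -/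
/-!
STATEMENT 7: under RSC^DC, if P robustly satisfies a safety property π in the
source, then P↓ robustly satisfies the weakened property
π^{Z_P-} ≜ π ∪ { t_1 | ∃ t ∈ π, (t ≺_P t_1 ∨ t_1 ≤ t) } in the target.
-/

namespace Stmt7

/-- A trace is either a finite list of events or an infinite sequence of events. -/
abbrev Trace (E : Type) := List E ⊕ (ℕ → E)

/-- `prefixOf m t`: the finite trace prefix `m` is a prefix of the trace `t`. -/
def prefixOf {E : Type} (m : List E) : Trace E → Prop
  | .inl l => m <+: l
  | .inr f => ∀ i (h : i < m.length), m.get ⟨i, h⟩ = f i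

/-- Well-formedness of a trace wrt the event `u = UndefP`: `u` occurs at most
once, and only as the last event (so never in an infinite trace). -/
def wf {E : Type} (u : E) : Trace E → Prop
  | .inl l => ∀ i (h : i < l.length), l.get ⟨i, h⟩ = u → i + 1 = l.length
  | .inr f => ∀ n, f n ≠ u

/-- The type of (well-formed) traces: by assumption every trace contains
`UndefP` at most once and only as its last event. -/
abbrev WTrace (E : Type) (u : E) := { t : Trace E // wf u t }

/-- `m` is a prefix of the (well-formed) trace `t`. -/
def wPrefix {E : Type} {u : E} (m : List E) (t : WTrace E u) : Prop :=
  prefixOf m t.1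

/-- `t ≺_P t'` (both traces): `t = m'·[UndefP]` for some finite `m' ≤ t'`. -/
def precP {E : Type} {u : E} (t t' : WTrace E u) : Prop :=
  ∃ m' : List E, t.1 = Sum.inl (m' ++ [u]) ∧ wPrefix m' t'

/-- `t ≺_P m` (trace vs finite prefix): `t = m'·[UndefP]` for some `m' ≤ m`. -/
def precPList {E : Type} {u : E} (t : WTrace E u) (m : List E) : Prop :=
  ∃ m' : List E, t.1 = Sum.inl (m' ++ [u]) ∧ m' <+: m

/-- `π` is a safety property. -/
def Safety {E : Type} {u : E} (π : Set (WTrace E u)) : Prop :=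
  ∀ t, t ∉ π → ∃ m : List E, wPrefix m t ∧ ∀ t', wPrefix m t' → t' ∉ π

/-- `π` is closed under extension of traces with undefined behavior in `P`. -/
def ClosedP {E : Type} {u : E} (π : Set (WTrace E u)) : Prop :=
  ∀ t ∈ π, ∀ t', precP t t' → t' ∈ π

/-- `Z_P ≜ Safety ∩ Closed_{≺_P}`. -/
def ZP {E : Type} {u : E} (π : Set (WTrace E u)) : Prop :=
  Safety π ∧ ClosedP π

/-- `t_1 ≤ t`: `t_1` is a finite trace that is a prefix of `t`. -/
def finPrefix {E : Type} {u : E} (t_1 t : WTrace E u) : Prop :=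
  ∃ l : List E, t_1.1 = Sum.inl l ∧ wPrefix l t

/-- `π^{Z_P-} ≜ π ∪ { t_1 | ∃ t ∈ π, (t ≺_P t_1 ∨ t_1 ≤ t) }`. -/
def zminus {E : Type} {u : E} (π : Set (WTrace E u)) : Set (WTrace E u) :=
  π ∪ { t_1 | ∃ t ∈ π, precP t t_1 ∨ finPrefix t_1 t }

theorem prefixOf_of_prefix {E : Type} {m' m : List E} (h : m' <+: m) :
    ∀ {t : Trace E}, prefixOf m t → prefixOf m' t
  | .inl _, hm => h.trans hm
  | .inr f, hm => fun i hi => by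
      have := hm i (hi.trans_le h.length_le)
      simpa [h.getElem hi] using this

theorem rscdc_robustly_preserves_zminus
    {E Prog TProg SCtx TCtx : Type} (u : E)
    (compile : Prog → TProg)
    (ssem : SCtx → Prog → WTrace E u → Prop)
    (tsem : TCtx → TProg → WTrace E u → Prop)
    -- RSC^DC
    (hrsc : ∀ (P : Prog) (CT : TCtx) (t : WTrace E u), tsem CT (compile P) t →
      ∀ m : List E, wPrefix m t →
        ∃ (CS : SCtx) (t : WTrace E u), ssem CS P t ∧
          (wPrefix m t ∨ precPList t m))
    (P : Prog) (π : Set (WTrace E u)) (hπ : Safety π)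
    -- P robustly satisfies π in the source
    (hrob : ∀ (CS : SCtx) (t : WTrace E u), ssem CS P t → t ∈ π) :
    -- P↓ robustly satisfies π^{Z_P-} in the target
    ∀ (CT : TCtx) (t : WTrace E u), tsem CT (compile P) t → t ∈ zminus π := by
  intro CT t ht
  by_cases htπ : t ∈ π
  · exact Or.inl htπ
  -- The safety-violating prefix of `t` is the one to back-translate: a source trace
  -- extending it would violate `π`, so the source trace must end in `UndefP` before it.
  obtain ⟨m, hm, hbad⟩ := hπ t htπ
  obtain ⟨CS, s, hs, hms | ⟨m', hsm, hm'⟩⟩ := hrsc P CT t ht m hm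
  · exact absurd (hrob CS s hs) (hbad s hms)
  · exact Or.inr ⟨s, hrob CS s hs, Or.inl ⟨m', hsm, prefixOf_of_prefix hm' hm⟩⟩

end Stmt7
end

section
/- The strengthened correspondence property S₁^{Z_P+} ≜ { t | ∀ m d x, (m·[Write d x] ≤ t ∨ m·[UndefP] ≤ t) → ∃ m', m'·[Read, Ret x] ≤ m } belongs to Z_P (it is a safety property and is in Closed_{≺_P}), and S₁^{Z_P+} ⊆ S₁ where S₁ ≜ { t | ∀ m d x, m·[Write d x] ≤ t → ∃ m', m'·[Read, Ret x] ≤ m }. -/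
/-!
STATEMENT 9: the strengthened correspondence property S₁^{Z_P+} belongs to Z_P
and S₁^{Z_P+} ⊆ S₁.
-/

/-!
The property is safety because a violation is witnessed by a prefix `m·[Write d x]` or `m·[UndefP]`,
and every extension of that prefix violates it in the same way.

For closure under `≺_P`, let `t = m'·[UndefP]` be in the property and `m' ≤ t'`. Since `UndefP`
follows `m'` in `t`, the prefix `m'` contains `Read, Ret x` for every `x`. Let `m·[e] ≤ t'`, where
`e` is a write of `x` or `UndefP`. Two prefixes of `t'` are comparable (`prefixOf_total`), so either
`m' ≤ m`, and `m` inherits the required `Read, Ret x` from `m'`, or `m·[e] ≤ m' ≤ t`, and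
membership of `t` applies to `m·[e]` itself.
-/

namespace Stmt9

/-- A trace is either a finite list of events or an infinite sequence of events. -/
abbrev Trace (E : Type) := List E ⊕ (ℕ → E)

/-- `prefixOf m t`: the finite trace prefix `m` is a prefix of the trace `t`. -/
def prefixOf {E : Type} (m : List E) : Trace E → Prop
  | .inl l => m <+: l
  | .inr f => ∀ i (h : i < m.length), m.get ⟨i, h⟩ = f i

/-- Well-formedness of a trace wrt the event `u = UndefP`: `u` occurs at most
once, and only as the last event (so never in an infinite trace). -/
def wf {E : Type} (u : E) : Trace E → Prop
  | .inl l => ∀ i (h : i < l.length), l.get ⟨i, h⟩ = u → i + 1 = l.length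
  | .inr f => ∀ n, f n ≠ u

/-- The type of (well-formed) traces: by assumption every trace contains
`UndefP` at most once and only as its last event. -/
abbrev WTrace (E : Type) (u : E) := { t : Trace E // wf u t }

/-- `m` is a prefix of the (well-formed) trace `t`. -/
def wPrefix {E : Type} {u : E} (m : List E) (t : WTrace E u) : Prop :=
  prefixOf m t.1

/-- `t ≺_P t'` (both traces): `t = m'·[UndefP]` for some finite `m' ≤ t'`. -/
def precP {E : Type} {u : E} (t t' : WTrace E u) : Prop :=
  ∃ m' : List E, t.1 = Sum.inl (m' ++ [u]) ∧ wPrefix m' t'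

/-- `t ≺_P m` (trace vs finite prefix): `t = m'·[UndefP]` for some `m' ≤ m`. -/
def precPList {E : Type} {u : E} (t : WTrace E u) (m : List E) : Prop :=
  ∃ m' : List E, t.1 = Sum.inl (m' ++ [u]) ∧ m' <+: m

/-- `π` is a safety property. -/
def Safety {E : Type} {u : E} (π : Set (WTrace E u)) : Prop :=
  ∀ t, t ∉ π → ∃ m : List E, wPrefix m t ∧ ∀ t', wPrefix m t' → t' ∉ π

/-- `π` is closed under extension of traces with undefined behavior in `P`. -/
def ClosedP {E : Type} {u : E} (π : Set (WTrace E u)) : Prop :=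
  ∀ t ∈ π, ∀ t', precP t t' → t' ∈ π

/-- `Z_P ≜ Safety ∩ Closed_{≺_P}`. -/
def ZP {E : Type} {u : E} (π : Set (WTrace E u)) : Prop :=
  Safety π ∧ ClosedP π

/-- `S₁ ≜ { t | ∀ m d x, m·[Write d x] ≤ t → ∃ m_1, m_1·[Read, Ret x] ≤ m }`. -/
def S1 {E Val : Type} {u : E} (read : E) (ret : Val → E) (write : Val → Val → E) :
    Set (WTrace E u) :=
  { t | ∀ (m : List E) (d x : Val), wPrefix (m ++ [write d x]) t →
        ∃ m_1 : List E, (m_1 ++ [read, ret x]) <+: m }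

/-- `S₁^{Z_P+} ≜ { t | ∀ m d x, (m·[Write d x] ≤ t ∨ m·[UndefP] ≤ t) →
∃ m_1, m_1·[Read, Ret x] ≤ m }`. -/
def S1plus {E Val : Type} {u : E} (read : E) (ret : Val → E) (write : Val → Val → E) :
    Set (WTrace E u) :=
  { t | ∀ (m : List E) (d x : Val),
        (wPrefix (m ++ [write d x]) t ∨ wPrefix (m ++ [u]) t) →
        ∃ m_1 : List E, (m_1 ++ [read, ret x]) <+: m }

theorem prefixOf_total {E : Type} {a b : List E} {t : Trace E}
    (ha : prefixOf a t) (hb : prefixOf b t) : a <+: b ∨ b <+: a := by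
  cases t with
  | inl l => exact List.prefix_or_prefix_of_prefix ha hb
  | inr f =>
    rcases le_total a.length b.length with h | h
    · exact Or.inl (List.prefix_iff_getElem.2
        ⟨h, fun i hi => (ha i hi).trans (hb i (hi.trans_le h)).symm⟩)
    · exact Or.inr (List.prefix_iff_getElem.2
        ⟨h, fun i hi => (hb i hi).trans (ha i (hi.trans_le h)).symm⟩)

theorem S1plus_mem_ZP_and_subset_S1
    {E Val : Type} [Nonempty Val] (u : E)
    (read : E) (ret : Val → E) (write : Val → Val → E)
    -- the events Read, Ret x, Write d x and UndefP are pairwise distinct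
    (h_read_undef : read ≠ u)
    (h_ret_undef : ∀ x, ret x ≠ u)
    (h_write_undef : ∀ d x, write d x ≠ u)
    (h_read_ret : ∀ x, read ≠ ret x)
    (h_read_write : ∀ d x, read ≠ write d x)
    (h_ret_write : ∀ x d y, ret x ≠ write d y)
    (h_ret_inj : Function.Injective ret)
    (h_write_inj : ∀ d x d_1 x_1, write d x = write d_1 x_1 → d = d_1 ∧ x = x_1) :
    ZP (S1plus (u := u) read ret write) ∧
    S1plus (u := u) read ret write ⊆ S1 (u := u) read ret write := by
  refine ⟨⟨?_, ?_⟩, fun t ht m d x h => ht m d x (Or.inl h)⟩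
  · intro t ht
    simp only [S1plus, Set.mem_ofPred_eq, not_forall] at ht
    obtain ⟨m, d, x, h | h, hn⟩ := ht
    · exact ⟨_, h, fun t' h' ht' => hn (ht' m d x (Or.inl h'))⟩
    · exact ⟨_, h, fun t' h' ht' => hn (ht' m d x (Or.inr h'))⟩
  · rintro t ht t' ⟨m', hm', hpre⟩ m d x h
    have lift : ∀ l : List E, l <+: m' ++ [u] → wPrefix l t := by
      intro l hl
      unfold wPrefix
      rw [hm']
      exact hl
    have key : ∀ e : E, wPrefix (m ++ [e]) t' → wPrefix (m ++ [e]) t ∨ m' <+: m := by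
      intro e he
      rcases prefixOf_total he hpre with h1 | h1
      · exact Or.inl (lift _ (h1.trans (List.prefix_append _ _)))
      · rcases List.prefix_concat_iff.1 h1 with h2 | h2
        · exact Or.inl (lift _ (h2 ▸ List.prefix_append _ _))
        · exact Or.inr h2
    have done : m' <+: m → ∃ m_1 : List E, (m_1 ++ [read, ret x]) <+: m := by
      intro hle
      obtain ⟨m_1, h1⟩ := ht m' d x (Or.inr (lift _ (List.prefix_refl _)))
      exact ⟨m_1, h1.trans hle⟩
    rcases h with h | h
    · exact (key _ h).elim (fun h' => ht m d x (Or.inl h')) done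
    · exact (key _ h).elim (fun h' => ht m d x (Or.inr h')) done

end Stmt9
end
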